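/- For every n ≥ 1 and all types (sets) X and Y, there is a bijection between: (1) the set of rooted forests on [n] equipped with a label in X on each edge and a label in Y on each root; and (2) the set of sequences of length n with entries in ([n] × X) ⊕ Y whose last entry lies in the Y summand. -/

import Mathlib

/-- A rooted forest on `[n]`: an acyclic simple graph on `Fin n` together with a chosen
set of roots containing exactly one vertex from each connected component. -/
structure RootedForest (n : ℕ) where
  graph : SimpleGraph (Fin n)
  acyclic : graph.IsAcyclic
  roots : Set (Fin n)
  existsUnique_root : ∀ v : Fin n, ∃! r, r ∈ roots ∧ graph.Reachable r v

/-!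
Orienting every edge towards the root turns a labelled rooted forest into one function
`g : V → (V × X) ⊕ Y`: a non-root records its parent and the label of the edge to it, a root
records its own label. The functions arising in this way are those whose parent relation is
well-founded.

The Prüfer code of `g` removes the least leaf of the remaining forest over and over, and writes down
its value under `g`. If `σ` lists the vertices in the order of removal and `a = g ∘ σ` is the code,
the leaves at step `i` are the remaining vertices that are not named as a parent by any `a j` with
`j ≥ i`, so the same greedy rule recovers `σ` from `g` and from `a`. When decoding, there is always
a leaf: the vertices already removed and the values still to be read are together no more numerous
than the vertices, and the last value names no vertex at all.
-/

namespace GeneralizedPrufer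

/-! ### Greedy enumeration -/

section Greedy

open Finset

variable {ι V : Type*} [LinearOrder ι] [LocallyFiniteOrderBot ι]

section Rule

variable [DecidableEq V] {c : ι → Finset V → V}

/-- The sequence built by the selection rule `c`, which sees the current step and the set of values
chosen at earlier steps. -/
def greedySeq (c : ι → Finset V → V) (i : ι) : V :=
  c i ((Iio i).attach.image fun j => greedySeq c j.1)
termination_by #(Iio i)
decreasing_by exact card_lt_card (Iio_ssubset_Iio (mem_Iio.1 j.2))

theorem greedySeq_eq (i : ι) : greedySeq c i = c i ((Iio i).image (greedySeq c)) := by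
  rw [greedySeq]
  congr 1
  ext v
  simp

theorem greedySeq_injective (hc : ∀ i S, #S ≤ #(Iio i) → c i S ∉ S) :
    Function.Injective (greedySeq c) := by
  refine Function.Injective.of_lt_imp_ne fun i j hij heq =>
    hc j ((Iio j).image (greedySeq c)) card_image_le ?_
  rw [← greedySeq_eq (c := c), ← heq]
  exact mem_image_of_mem _ (mem_Iio.2 hij)

theorem eq_greedySeq {f : ι → V} (hf : ∀ i, f i = c i ((Iio i).image f)) : f = greedySeq c := by
  funext i
  induction i using (measure fun i : ι => #(Iio i)).wf.induction with
  | _ i ih =>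
    rw [hf, greedySeq_eq,
      image_congr fun j hj => ih j (card_lt_card (Iio_ssubset_Iio (mem_Iio.1 hj)))]

end Rule

variable [Fintype ι] [Fintype V] [LinearOrder V]

theorem existsUnique_equiv_isLeast (hcard : Fintype.card ι = Fintype.card V)
    {good : ι → Finset V → Set V} (hne : ∀ i S, #S ≤ #(Iio i) → (good i S).Nonempty)
    (hnotMem : ∀ i S, ∀ v ∈ good i S, v ∉ S) :
    ∃! σ : ι ≃ V, ∀ i, IsLeast (good i ((Iio i).image σ)) (σ i) := by
  have hleast : ∀ i S, ∃ v, #S ≤ #(Iio i) → IsLeast (good i S) v := by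
    intro i S
    by_cases hS : #S ≤ #(Iio i)
    · obtain ⟨v, hv, hmin⟩ := wellFounded_lt.has_min _ (hne i S hS)
      exact ⟨v, fun _ => ⟨hv, fun w hw => not_lt.1 (hmin w hw)⟩⟩
    · exact ⟨(hne i ∅ (by simp)).some, fun h => absurd h hS⟩
  choose c hc using hleast
  have hinj : Function.Injective (greedySeq c) :=
    greedySeq_injective fun i S hS => hnotMem i S _ (hc i S hS).1
  refine ⟨.ofBijective _ ((Fintype.bijective_iff_injective_and_card _).2 ⟨hinj, hcard⟩), ?_, ?_⟩
  · intro i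
    have hi := hc i ((Iio i).image (greedySeq c)) card_image_le
    rwa [← greedySeq_eq (c := c)] at hi
  · intro τ hτ
    exact DFunLike.coe_injective <| eq_greedySeq fun i => (hτ i).unique (hc i _ card_image_le)

end Greedy

theorem exists_mem_forall_not_rel {V : Type*} {r : V → V → Prop} (hr : WellFounded r)
    {S : Finset V} (hS : S.Nonempty) : ∃ v ∈ S, ∀ w ∈ S, ¬ r v w := by
  obtain ⟨v, hv, hmax⟩ := S.exists_max_image (fun v => (hr.apply v).rank) hS
  exact ⟨v, hv, fun w hw hvw => (hmax w hw).not_gt (Acc.rank_lt_of_rel (hr.apply w) hvw)⟩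

/-- `ParentRel p w v` says that `w` is the parent of `v` under the partial parent function `p`,
where `p v = none` marks `v` as a root. Its well-foundedness is the absence of infinite chains of
ancestors, hence of directed cycles. -/
def ParentRel {V : Type*} (p : V → Option V) (w v : V) : Prop :=
  p v = some w

/-! ### The Prüfer code -/

section Code

open Finset

variable {ι V A : Type*} [LinearOrder ι] [LocallyFiniteOrderBot ι] [LinearOrder V]
  {parent : A → Option V} {σ : ι ≃ V} {a : ι → A} {l : ι}

/-- `a` is a Prüfer code with elimination order `σ`: at each step `i`, the vertex `σ i` is the
least leaf, that is, the least vertex that has not been eliminated and is not the parent named by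
a current or later entry of `a`. -/
def IsPruferCode (parent : A → Option V) (σ : ι ≃ V) (a : ι → A) : Prop :=
  ∀ i, IsLeast {v | v ∉ (Iio i).image σ ∧ ∀ j, i ≤ j → parent (a j) ≠ some v} (σ i)

theorem IsPruferCode.lt_of_parent_eq (h : IsPruferCode parent σ a) {i j : ι}
    (hij : parent (a i) = some (σ j)) : i < j :=
  not_le.1 fun hji => (h j).1.2 i hji hij

theorem IsPruferCode.parent_eq_none (h : IsPruferCode parent σ a) (hl : IsTop l) :
    parent (a l) = none := by
  refine Option.eq_none_iff_forall_ne_some.2 fun v hv => (hl (σ.symm v)).not_gt ?_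
  exact h.lt_of_parent_eq (by rwa [σ.apply_symm_apply])

theorem IsPruferCode.wellFounded_parentRel [WellFoundedGT ι] (h : IsPruferCode parent σ a) :
    WellFounded (ParentRel (parent ∘ a ∘ σ.symm)) := by
  refine Subrelation.wf (fun {w v} hwv => ?_) (InvImage.wf σ.symm (wellFounded_gt (α := ι)))
  exact h.lt_of_parent_eq (hwv.trans (by rw [σ.apply_symm_apply]))

theorem isPruferCode_comp_iff {g : V → A} :
    IsPruferCode parent σ (g ∘ σ) ↔ ∀ i, IsLeast {v | v ∉ (Iio i).image σ ∧
      ∀ w ∉ (Iio i).image σ, parent (g w) ≠ some v} (σ i) := by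
  have hremaining (i : ι) (P : V → Prop) :
      (∀ w ∉ (Iio i).image σ, P w) ↔ ∀ j, i ≤ j → P (σ j) := by
    rw [← σ.forall_congr_right]
    simp
  simp only [IsPruferCode, hremaining, Function.comp_apply]

variable [Fintype ι] [Fintype V]

theorem exists_notMem_forall_parent_ne (hcard : Fintype.card ι = Fintype.card V) (hl : IsTop l)
    (ha : parent (a l) = none) {i : ι} {S : Finset V} (hS : #S ≤ #(Iio i)) :
    ∃ v ∉ S, ∀ j, i ≤ j → parent (a j) ≠ some v := by
  let excluded : Finset (Option V) := S.image some ∪ (Iio i)ᶜ.image (parent ∘ a)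
  have hexcluded : #excluded < Fintype.card (Option V) := calc
    #excluded ≤ #(Iio i) + #(Iio i)ᶜ :=
      (card_union_le _ _).trans (add_le_add (card_image_le.trans hS) card_image_le)
    _ = Fintype.card V := by rw [card_add_card_compl, hcard]
    _ < Fintype.card (Option V) := by simp
  obtain ⟨o, -, ho⟩ := exists_mem_notMem_of_card_lt_card (t := univ) hexcluded
  have hparent (j : ι) (hij : i ≤ j) : parent (a j) ≠ o := fun h =>
    ho (mem_union_right _ (mem_image.2 ⟨j, by simpa using hij, h⟩))
  obtain ⟨v, rfl⟩ := Option.ne_none_iff_exists'.1 fun h => hparent l (hl i) (ha.trans h.symm)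
  exact ⟨v, fun hv => ho (mem_union_left _ (mem_image_of_mem _ hv)), hparent⟩

theorem existsUnique_isPruferCode (hcard : Fintype.card ι = Fintype.card V) (hl : IsTop l)
    (ha : parent (a l) = none) : ∃! σ : ι ≃ V, IsPruferCode parent σ a :=
  existsUnique_equiv_isLeast hcard
    (good := fun i S => {v | v ∉ S ∧ ∀ j, i ≤ j → parent (a j) ≠ some v})
    (fun _ _ hS => exists_notMem_forall_parent_ne hcard hl ha hS) fun _ _ _ hv => hv.1

theorem existsUnique_isPruferCode_comp (hcard : Fintype.card ι = Fintype.card V) {g : V → A}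
    (hg : WellFounded (ParentRel (parent ∘ g))) :
    ∃! σ : ι ≃ V, IsPruferCode parent σ (g ∘ σ) := by
  simp only [isPruferCode_comp_iff]
  refine existsUnique_equiv_isLeast hcard
    (good := fun _ S => {v | v ∉ S ∧ ∀ w ∉ S, parent (g w) ≠ some v}) ?_ fun _ _ _ hv => hv.1
  intro i S hS
  have hlt : #(Iio i) < Fintype.card ι := card_lt_univ_of_notMem notMem_Iio_self
  have hremaining : Sᶜ.Nonempty := by
    rw [← card_pos, card_compl]
    omega
  obtain ⟨v, hv, hleaf⟩ := exists_mem_forall_not_rel hg hremaining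
  exact ⟨v, mem_compl.1 hv, fun w hw => hleaf w (mem_compl.2 hw)⟩

/-- The order in which the vertices are eliminated when the decorated parent function `g` is
encoded. -/
noncomputable def encodingOrder (hcard : Fintype.card ι = Fintype.card V) {g : V → A}
    (hg : WellFounded (ParentRel (parent ∘ g))) : ι ≃ V :=
  (existsUnique_isPruferCode_comp hcard hg).choose

theorem isPruferCode_encodingOrder (hcard : Fintype.card ι = Fintype.card V) {g : V → A}
    (hg : WellFounded (ParentRel (parent ∘ g))) :
    IsPruferCode parent (encodingOrder hcard hg) (g ∘ encodingOrder hcard hg) :=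
  (existsUnique_isPruferCode_comp hcard hg).choose_spec.1

/-- The elimination order recovered from the code `a`. -/
noncomputable def decodingOrder (hcard : Fintype.card ι = Fintype.card V) (hl : IsTop l)
    (ha : parent (a l) = none) : ι ≃ V :=
  (existsUnique_isPruferCode hcard hl ha).choose

theorem isPruferCode_decodingOrder (hcard : Fintype.card ι = Fintype.card V) (hl : IsTop l)
    (ha : parent (a l) = none) : IsPruferCode parent (decodingOrder hcard hl ha) a :=
  (existsUnique_isPruferCode hcard hl ha).choose_spec.1

/-- The Prüfer correspondence for parent functions with arbitrary decorations: `parent` extracts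
from the datum `g v` of a vertex the parent of `v`, and the code of `g` lists its data in the order
of elimination. -/
noncomputable def pruferEquiv (parent : A → Option V) (hcard : Fintype.card ι = Fintype.card V)
    (hl : IsTop l) :
    {g : V → A // WellFounded (ParentRel (parent ∘ g))} ≃ {a : ι → A // parent (a l) = none} where
  toFun g := ⟨g.1 ∘ encodingOrder hcard g.2,
    (isPruferCode_encodingOrder hcard g.2).parent_eq_none hl⟩
  invFun a := ⟨a.1 ∘ (decodingOrder hcard hl a.2).symm,
    (isPruferCode_decodingOrder hcard hl a.2).wellFounded_parentRel⟩
  left_inv := by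
    rintro ⟨g, hg⟩
    have hcode := isPruferCode_encodingOrder hcard hg
    have ha := hcode.parent_eq_none hl
    have horder : decodingOrder hcard hl ha = encodingOrder hcard hg :=
      (existsUnique_isPruferCode hcard hl ha).unique (isPruferCode_decodingOrder hcard hl ha) hcode
    simp [horder, Function.comp_assoc]
  right_inv := by
    rintro ⟨a, ha⟩
    have hcode := isPruferCode_decodingOrder hcard hl ha
    have hg := hcode.wellFounded_parentRel
    have horder : encodingOrder hcard hg = decodingOrder hcard hl ha :=
      (existsUnique_isPruferCode_comp hcard hg).unique (isPruferCode_encodingOrder hcard hg)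
        (by simpa [Function.comp_assoc] using hcode)
    simp [horder, Function.comp_assoc]

end Code

/-! ### Rooted forests as parent functions -/

section Forest

variable {V : Type*} {p : V → Option V} {G : SimpleGraph V} {R : Set V}

/-- The undirected graph joining each non-root vertex to its parent. -/
def parentGraph (p : V → Option V) : SimpleGraph V :=
  SimpleGraph.fromRel (ParentRel p)

theorem parentGraph_adj (hp : WellFounded (ParentRel p)) {u v : V} :
    (parentGraph p).Adj u v ↔ ParentRel p u v ∨ ParentRel p v u := by
  rw [parentGraph, SimpleGraph.fromRel_adj, and_iff_right_of_imp]
  rintro h rfl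
  exact hp.irrefl.irrefl u (h.elim id id)

theorem parentGraph_adj_of_eq_some (hp : WellFounded (ParentRel p)) {v w : V}
    (hvw : p v = some w) : (parentGraph p).Adj v w :=
  (parentGraph_adj hp).2 (.inr hvw)

theorem parentGraph_le (hpG : ∀ v w, p v = some w → G.Adj v w) : parentGraph p ≤ G := by
  intro u v huv
  rw [parentGraph, SimpleGraph.fromRel_adj] at huv
  exact huv.2.elim (fun h => (hpG _ _ h).symm) (hpG _ _)

/- A childless vertex of a cycle would have both its neighbours on the cycle as its parent. -/
theorem isAcyclic_parentGraph (hp : WellFounded (ParentRel p)) : (parentGraph p).IsAcyclic := by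
  classical
  intro v c hc
  obtain ⟨u, hu, hchildless⟩ := exists_mem_forall_not_rel hp
    (S := c.support.toFinset) ⟨v, by simp⟩
  rw [List.mem_toFinset] at hu
  have hcu := hc.rotate hu
  have hparent : ∀ i, (parentGraph p).Adj u ((c.rotate u hu).getVert i) →
      p u = some ((c.rotate u hu).getVert i) := by
    intro i hadj
    refine ((parentGraph_adj hp).1 hadj).resolve_left (hchildless _ ?_)
    simpa only [List.mem_toFinset, SimpleGraph.Walk.mem_support_rotate_iff] using
      (c.rotate u hu).getVert_mem_support i
  have hsnd := hparent _ ((c.rotate u hu).adj_snd hcu.not_nil)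
  have hpenultimate := hparent _ ((c.rotate u hu).adj_penultimate hcu.not_nil).symm
  exact hcu.snd_ne_penultimate (Option.some.inj (hsnd.symm.trans hpenultimate))

/-- The root at the end of the chain of ancestors of a vertex. -/
def ancestralRoot (hp : WellFounded (ParentRel p)) (v : V) : V :=
  match _h : p v with
  | none => v
  | some w => ancestralRoot hp w
termination_by hp.wrap v
decreasing_by exact _h

theorem ancestralRoot_of_eq_none (hp : WellFounded (ParentRel p)) {v : V} (hv : p v = none) :
    ancestralRoot hp v = v := by
  rw [ancestralRoot]
  split <;> simp_all

theorem ancestralRoot_of_eq_some (hp : WellFounded (ParentRel p)) {v w : V}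
    (hvw : p v = some w) : ancestralRoot hp v = ancestralRoot hp w := by
  rw [ancestralRoot]
  split <;> simp_all

theorem parent_ancestralRoot (hp : WellFounded (ParentRel p)) (v : V) :
    p (ancestralRoot hp v) = none := by
  induction v using hp.induction with
  | _ v ih =>
    cases hv : p v with
    | none => rwa [ancestralRoot_of_eq_none hp hv]
    | some w => rw [ancestralRoot_of_eq_some hp hv, ih w hv]

theorem reachable_ancestralRoot (hp : WellFounded (ParentRel p)) (v : V) :
    (parentGraph p).Reachable (ancestralRoot hp v) v := by
  induction v using hp.induction with
  | _ v ih =>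
    cases hv : p v with
    | none => rw [ancestralRoot_of_eq_none hp hv]
    | some w =>
      rw [ancestralRoot_of_eq_some hp hv]
      exact (ih w hv).trans (parentGraph_adj_of_eq_some hp hv).symm.reachable

theorem ancestralRoot_eq_of_reachable (hp : WellFounded (ParentRel p)) {u v : V}
    (huv : (parentGraph p).Reachable u v) : ancestralRoot hp u = ancestralRoot hp v := by
  rw [SimpleGraph.reachable_iff_reflTransGen] at huv
  induction huv with
  | refl => rfl
  | tail _ hadj ih =>
    refine ih.trans (((parentGraph_adj hp).1 hadj).elim (fun h => ?_) fun h => ?_)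
    · exact (ancestralRoot_of_eq_some hp h).symm
    · exact ancestralRoot_of_eq_some hp h

theorem existsUnique_root_parentGraph (hp : WellFounded (ParentRel p)) (v : V) :
    ∃! r, r ∈ {u | p u = none} ∧ (parentGraph p).Reachable r v := by
  refine ⟨ancestralRoot hp v, ⟨parent_ancestralRoot hp v, reachable_ancestralRoot hp v⟩, ?_⟩
  rintro r ⟨hr, hrv⟩
  rw [← ancestralRoot_eq_of_reachable hp hrv, ancestralRoot_of_eq_none hp hr]

/- A neighbour of `v` is its parent or one of its children, and the children of `v` are told apart
from its parent once the parent of the parent is known. -/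
theorem eq_of_parentGraph_eq {q : V → Option V} (hp : WellFounded (ParentRel p))
    (hgraph : parentGraph p = parentGraph q) (hroots : ∀ v, p v = none ↔ q v = none) : p = q := by
  funext v
  induction v using hp.induction with
  | _ v ih =>
    cases hv : p v with
    | none => exact ((hroots v).1 hv).symm
    | some w =>
      have hadj : (parentGraph q).Adj v w := hgraph ▸ parentGraph_adj_of_eq_some hp hv
      rw [parentGraph, SimpleGraph.fromRel_adj] at hadj
      refine (hadj.2.resolve_left fun hw : q w = some v => ?_).symm
      exact hp.asymmetric _ _ hv ((ih w hv).trans hw)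

theorem exists_adj_dist_lt {u v : V} (huv : G.Reachable u v) (hne : u ≠ v) :
    ∃ w, G.Adj u w ∧ G.dist w v < G.dist u v := by
  obtain ⟨c, hc⟩ := huv.exists_walk_length_eq_dist
  have hnil : ¬ c.Nil := SimpleGraph.Walk.not_nil_of_ne hne
  refine ⟨c.snd, c.adj_snd hnil, ?_⟩
  rw [← hc, ← c.length_tail_add_one hnil]
  exact Nat.lt_succ_of_le (SimpleGraph.dist_le c.tail)

theorem exists_parent_adj (hR : ∀ v, ∃! r, r ∈ R ∧ G.Reachable r v) :
    ∃ p : V → Option V, WellFounded (ParentRel p) ∧ (∀ v w, p v = some w → G.Adj v w) ∧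
      ∀ v, p v = none ↔ v ∈ R := by
  classical
  choose ρ hρ hρ_unique using hR
  have hcloser : ∀ v, v ∉ R → ∃ w, G.Adj v w ∧ G.dist w (ρ w) < G.dist v (ρ v) := by
    intro v hv
    obtain ⟨w, hvw, hdist⟩ :=
      exists_adj_dist_lt (hρ v).2.symm fun h => hv (h ▸ (hρ v).1)
    have hρ_eq : ρ v = ρ w := hρ_unique w _ ⟨(hρ v).1, (hρ v).2.trans hvw.reachable⟩
    exact ⟨w, hvw, hρ_eq ▸ hdist⟩
  choose! next hadj hdist using hcloser
  refine ⟨fun v => if v ∈ R then none else some (next v), ?_, ?_, by simp⟩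
  · refine Subrelation.wf (fun {w v} hwv => ?_) (measure fun v => G.dist v (ρ v)).wf
    obtain ⟨hv, rfl⟩ : v ∉ R ∧ next v = w := by simpa [ParentRel] using hwv
    exact hdist v hv
  · intro v w hvw
    obtain ⟨hv, rfl⟩ : v ∉ R ∧ next v = w := by simpa using hvw
    exact hadj v hv

theorem eq_of_le_of_reachable_imp {H : SimpleGraph V} (hG : G.IsAcyclic) (hHG : H ≤ G)
    (hreach : ∀ u v, G.Reachable u v → H.Reachable u v) : H = G := by
  have heq : H.Reachable = G.Reachable := by
    ext u v
    exact ⟨.mono hHG, hreach u v⟩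
  exact ((SimpleGraph.maximal_isAcyclic_iff_reachable_eq hHG (hG.anti hHG)).2 heq).eq_of_le
    ⟨le_rfl, hG⟩ hHG

theorem exists_parentGraph_eq (hG : G.IsAcyclic) (hR : ∀ v, ∃! r, r ∈ R ∧ G.Reachable r v) :
    ∃ p : V → Option V, WellFounded (ParentRel p) ∧ parentGraph p = G ∧
      {v | p v = none} = R := by
  obtain ⟨p, hp, hadj, hroots⟩ := exists_parent_adj hR
  have hle := parentGraph_le hadj
  refine ⟨p, hp, eq_of_le_of_reachable_imp hG hle fun u v huv => ?_, Set.ext hroots⟩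
  have hroot (w : V) : ancestralRoot hp w ∈ R ∧ G.Reachable (ancestralRoot hp w) w :=
    ⟨(hroots _).1 (parent_ancestralRoot hp w), (reachable_ancestralRoot hp w).mono hle⟩
  have heq : ancestralRoot hp u = ancestralRoot hp v :=
    (hR v).unique ⟨(hroot u).1, (hroot u).2.trans huv⟩ (hroot v)
  exact (reachable_ancestralRoot hp u).symm.trans (heq ▸ reachable_ancestralRoot hp v)

/-- Rooted forests on `[n]` are the same as partial parent functions without infinite chains of
ancestors. -/
noncomputable def rootedForestEquiv (n : ℕ) :
    {p : Fin n → Option (Fin n) // WellFounded (ParentRel p)} ≃ RootedForest n :=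
  .ofBijective
    (fun p => ⟨parentGraph p.1, isAcyclic_parentGraph p.2, {v | p.1 v = none},
      existsUnique_root_parentGraph p.2⟩) <| by
    constructor
    · rintro ⟨p, hp⟩ ⟨q, hq⟩ heq
      rw [RootedForest.mk.injEq] at heq
      exact Subtype.ext (eq_of_parentGraph_eq hp heq.1 fun v => Set.ext_iff.1 heq.2 v)
    · rintro ⟨G, hG, R, hR⟩
      obtain ⟨p, hp, rfl, rfl⟩ := exists_parentGraph_eq hG hR
      exact ⟨⟨p, hp⟩, rfl⟩

/-- Each edge of the graph of a parent function corresponds to its child endpoint. -/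
noncomputable def nonrootEquivEdgeSet (hp : WellFounded (ParentRel p)) :
    {v // p v ≠ none} ≃ (parentGraph p).edgeSet :=
  .ofBijective
    (fun v => ⟨s(v.1, (p v.1).get (Option.isSome_iff_ne_none.2 v.2)),
      parentGraph_adj_of_eq_some hp (by simp)⟩) <| by
    constructor
    · rintro ⟨u, hu⟩ ⟨v, hv⟩ heq
      rcases Sym2.eq_iff.1 (congrArg Subtype.val heq) with ⟨huv, -⟩ | ⟨huv, hvu⟩
      · exact Subtype.ext huv
      · have hp_v : ParentRel p u v := Option.eq_some_iff_get_eq.2 ⟨_, huv.symm⟩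
        have hp_u : ParentRel p v u := Option.eq_some_iff_get_eq.2 ⟨_, hvu⟩
        exact absurd hp_u (hp.asymmetric _ _ hp_v)
    · rintro ⟨e, he⟩
      induction e using Sym2.ind with
      | _ u v =>
        rcases (parentGraph_adj hp).1 he with h | h
        · exact ⟨⟨v, h.trans_ne (Option.some_ne_none u)⟩,
            Subtype.ext (by simp [Option.get_of_eq_some _ h, Sym2.eq_swap])⟩
        · exact ⟨⟨u, h.trans_ne (Option.some_ne_none v)⟩,
            Subtype.ext (by simp [Option.get_of_eq_some _ h])⟩

end Forest

/-! ### Labels -/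

section Labels

variable {V X Y : Type*}

/-- The parent named by the datum of a vertex: a non-root records its parent together with the
label in `X` of the edge to it, a root records its own label in `Y`. -/
def namedParent : (V × X) ⊕ Y → Option V :=
  Sum.elim (fun e => some e.1) fun _ => none

/-- The data of a root are the labels in `Y`. -/
def namedParentFiberEquivOfEqNone {o : Option V} (ho : o = none) :
    {d : (V × X) ⊕ Y // namedParent d = o} ≃ Y where
  toFun
    | ⟨.inl _, h⟩ => nomatch h.trans ho
    | ⟨.inr y, _⟩ => y
  invFun y := ⟨.inr y, ho.symm⟩
  left_inv := by
    rintro ⟨_ | y, h⟩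
    · cases h.trans ho
    · rfl
  right_inv _ := rfl

/-- The data of a non-root with a given parent are the labels in `X`. -/
def namedParentFiberEquivOfNeNone {o : Option V} (ho : o ≠ none) :
    {d : (V × X) ⊕ Y // namedParent d = o} ≃ X where
  toFun
    | ⟨.inl e, _⟩ => e.2
    | ⟨.inr _, h⟩ => absurd h.symm ho
  invFun x := ⟨.inl (o.get (Option.isSome_iff_ne_none.2 ho), x), by simp [namedParent]⟩
  left_inv := by
    rintro ⟨e | _, rfl⟩
    · rfl
    · exact absurd rfl ho
  right_inv _ := rfl

/-- Labels in `X` on the non-roots and in `Y` on the roots of a parent function `p` amount to a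
function to `(V × X) ⊕ Y` naming the parents prescribed by `p`. -/
noncomputable def labelsEquiv (p : V → Option V) :
    ({v // p v ≠ none} → X) × ({v // p v = none} → Y) ≃
      {g : V → (V × X) ⊕ Y // namedParent ∘ g = p} := by
  classical
  exact calc
    ({v // p v ≠ none} → X) × ({v // p v = none} → Y)
      ≃ ({v // p v = none} → Y) × ({v // p v ≠ none} → X) := .prodComm _ _
    _ ≃ (∀ v : {v // p v = none}, {d : (V × X) ⊕ Y // namedParent d = p v}) ×
          ∀ v : {v // p v ≠ none}, {d : (V × X) ⊕ Y // namedParent d = p v} :=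
      .prodCongr (.piCongrRight fun v => (namedParentFiberEquivOfEqNone v.2).symm)
        (.piCongrRight fun v => (namedParentFiberEquivOfNeNone v.2).symm)
    _ ≃ ∀ v, {d : (V × X) ⊕ Y // namedParent d = p v} :=
      (Equiv.piEquivPiSubtypeProd (p · = none) fun v => {d // namedParent d = p v}).symm
    _ ≃ {g : V → (V × X) ⊕ Y // ∀ v, namedParent (g v) = p v} := Equiv.subtypePiEquivPi.symm
    _ ≃ {g : V → (V × X) ⊕ Y // namedParent ∘ g = p} :=
      Equiv.subtypeEquivRight fun _ => funext_iff.symm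

/-- A labelled rooted forest is the same as a function recording at each non-root its parent and
the label of the edge to it, and at each root its label. -/
noncomputable def labelledRootedForestEquiv (n : ℕ) (X Y : Type*) :
    (F : RootedForest n) × (F.graph.edgeSet → X) × ({v : Fin n // v ∈ F.roots} → Y) ≃
      {g : Fin n → (Fin n × X) ⊕ Y // WellFounded (ParentRel (namedParent ∘ g))} :=
  calc
    (F : RootedForest n) × (F.graph.edgeSet → X) × ({v : Fin n // v ∈ F.roots} → Y)
      ≃ (p : {p : Fin n → Option (Fin n) // WellFounded (ParentRel p)}) ×
          ({v // p.1 v ≠ none} → X) × ({v // p.1 v = none} → Y) :=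
      (Equiv.sigmaCongr (rootedForestEquiv n) fun p =>
        .prodCongr ((nonrootEquivEdgeSet p.2).arrowCongr (.refl X)) (.refl _)).symm
    _ ≃ (p : {p : Fin n → Option (Fin n) // WellFounded (ParentRel p)}) ×
          {g : Fin n → (Fin n × X) ⊕ Y // namedParent ∘ g = p.1} :=
      .sigmaCongrRight fun p => labelsEquiv p.1
    _ ≃ {g : Fin n → (Fin n × X) ⊕ Y // WellFounded (ParentRel (namedParent ∘ g))} :=
      .sigmaSubtypeFiberEquivSubtype (namedParent ∘ ·) fun _ => Iff.rfl

theorem namedParent_eq_none_iff {d : (V × X) ⊕ Y} : namedParent d = none ↔ d.isRight := by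
  cases d <;> simp [namedParent]

end Labels

end GeneralizedPrufer

open GeneralizedPrufer

/-- Generalized Prüfer correspondence: rooted forests on `[n]` with a label in `X` on
each edge and a label in `Y` on each root are in bijection with sequences of length `n`
over `([n] × X) ⊕ Y` whose last entry lies in the `Y` summand. -/
theorem generalized_prufer_bijection (n : ℕ) (hn : 1 ≤ n) (X Y : Type*) :
    Nonempty (
      ((F : RootedForest n) × (F.graph.edgeSet → X) × ({v : Fin n // v ∈ F.roots} → Y)) ≃
      {f : Fin n → (Fin n × X) ⊕ Y // (f ⟨n - 1, by omega⟩).isRight}) := by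
  have hl : IsTop (⟨n - 1, by omega⟩ : Fin n) := fun i => Nat.le_sub_one_of_lt i.2
  exact ⟨calc
    (F : RootedForest n) × (F.graph.edgeSet → X) × ({v : Fin n // v ∈ F.roots} → Y)
      ≃ {g : Fin n → (Fin n × X) ⊕ Y // WellFounded (ParentRel (namedParent ∘ g))} :=
      labelledRootedForestEquiv n X Y
    _ ≃ {f : Fin n → (Fin n × X) ⊕ Y // namedParent (f ⟨n - 1, by omega⟩) = none} :=
      pruferEquiv namedParent rfl hl
    _ ≃ {f : Fin n → (Fin n × X) ⊕ Y // (f ⟨n - 1, by omega⟩).isRight} :=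
      .subtypeEquivRight fun _ => namedParent_eq_none_iff⟩
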